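/- If the pair of random parameters (Θ₁, Θ₂) is independent of (X, Y), and Θ₁ and Θ₂ are independent and identically distributed, then the expected disagreement satisfies ℙ[c(Θ₁, X) ≠ c(Θ₂, X)] = 1 − Σ_{k ∈ K} E[p_k(X)²], where p_k(x) = ℙ[c(Θ₁, x) = k]. -/

import Mathlib

open MeasureTheory ProbabilityTheory

/-! Since `X` is independent of the pair `(Θ₁, Θ₂)`, conditioning on `X = x` leaves the parameters
i.i.d.; so both classifiers predict `k` with conditional probability `p_k(x) ^ 2`. Integrating over
the law of `X` and summing over `k` gives the probability of agreement. -/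

section Agreement

variable {Ω α β K : Type*} [MeasurableSpace Ω] [MeasurableSpace α] [MeasurableSpace β]
  [MeasurableSpace K] {μ : Measure Ω}

theorem measureReal_setOf_prodMk_mem_eq_integral_of_indepFun [IsFiniteMeasure μ]
    {X : Ω → α} {T : Ω → β} (hX : AEMeasurable X μ) (hT : AEMeasurable T μ)
    (hXT : IndepFun X T μ) {s : Set (α × β)} (hs : MeasurableSet s) :
    μ.real {ω | (X ω, T ω) ∈ s} = ∫ ω, μ.real {ω' | (X ω, T ω') ∈ s} ∂μ := by
  have hmeas : Measurable fun x ↦ μ.map T (Prod.mk x ⁻¹' s) := measurable_measure_prodMk_left hs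
  have hmeasX : AEMeasurable (fun ω ↦ μ.map T (Prod.mk (X ω) ⁻¹' s)) μ := hmeas.comp_aemeasurable hX
  have hsection (x : α) : μ.map T (Prod.mk x ⁻¹' s) = μ {ω' | (x, T ω') ∈ s} :=
    Measure.map_apply_of_aemeasurable hT (measurable_prodMk_left hs)
  have hfreeze : μ {ω | (X ω, T ω) ∈ s} = ∫⁻ ω, μ.map T (Prod.mk (X ω) ⁻¹' s) ∂μ := calc
    μ {ω | (X ω, T ω) ∈ s} = μ.map (fun ω ↦ (X ω, T ω)) s :=
      (Measure.map_apply_of_aemeasurable (hX.prodMk hT) hs).symm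
    _ = (μ.map X).prod (μ.map T) s := by
      rw [hXT.map_prod_eq_prod_map_map hX hT]
    _ = ∫⁻ ω, μ.map T (Prod.mk (X ω) ⁻¹' s) ∂μ := by
      rw [Measure.prod_apply hs, lintegral_map' hmeas.aemeasurable hX]
  rw [measureReal_def, hfreeze, ← integral_toReal hmeasX (.of_forall fun _ ↦ measure_lt_top _ _)]
  simp only [hsection, measureReal_def]

theorem hasSum_measureReal_setOf_eq_and_eq [Countable K] [MeasurableSingletonClass K]
    [IsFiniteMeasure μ] {U V : Ω → K} (hU : AEMeasurable U μ) (hV : AEMeasurable V μ) :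
    HasSum (fun k ↦ μ.real {ω | U ω = k ∧ V ω = k}) (μ.real {ω | U ω = V ω}) := by
  have hnull (k : K) : NullMeasurableSet {ω | U ω = k ∧ V ω = k} μ :=
    (hU.nullMeasurableSet_preimage (measurableSet_singleton k)).inter
      (hV.nullMeasurableSet_preimage (measurableSet_singleton k))
  have hdisj : Pairwise (Function.onFun (AEDisjoint μ) fun k ↦ {ω | U ω = k ∧ V ω = k}) :=
    fun _ _ hne ↦ (Set.disjoint_left.2 fun _ h h' ↦ hne (h.1.symm.trans h'.1)).aedisjoint
  have hUnion : {ω | U ω = V ω} = ⋃ k, {ω | U ω = k ∧ V ω = k} := by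
    ext ω
    simp [eq_comm]
  have hmeasure : μ {ω | U ω = V ω} = ∑' k, μ {ω | U ω = k ∧ V ω = k} := by
    rw [hUnion, measure_iUnion₀ hdisj hnull]
  rw [measureReal_def, hmeasure, ENNReal.tsum_toReal_eq fun _ ↦ measure_ne_top μ _]
  exact (ENNReal.summable_toReal (hmeasure ▸ measure_ne_top μ _)).hasSum

end Agreement

section EnsembleProb

/-- The ensemble probability `p_k(x) = μ[c(T, x) = k]` that a classifier with random parameter `T`
predicts the label `k` at the fixed point `x`. -/
noncomputable def ensembleProb {Ω 𝒳 Θ K : Type*} [MeasurableSpace Ω] (μ : Measure Ω)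
    (c : Θ × 𝒳 → K) (T : Ω → Θ) (k : K) (x : 𝒳) : ℝ :=
  μ.real {ω | c (T ω, x) = k}

variable {Ω 𝒳 Θ Θ' K K' : Type*} [MeasurableSpace Ω] [MeasurableSpace 𝒳] [MeasurableSpace Θ]
  [MeasurableSpace Θ'] [MeasurableSpace K] [MeasurableSpace K'] {μ : Measure Ω}

theorem measurableSet_setOf_prodMk_eq [MeasurableSingletonClass K] {c : Θ × 𝒳 → K}
    (hc : Measurable c) (k : K) (x : 𝒳) : MeasurableSet {t | c (t, x) = k} :=
  measurable_prodMk_right (hc (measurableSet_singleton k))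

theorem ensembleProb_eq_of_identDistrib [MeasurableSingletonClass K] {Ω' : Type*}
    [MeasurableSpace Ω'] {μ' : Measure Ω'} {c : Θ × 𝒳 → K} {T : Ω → Θ} {T' : Ω' → Θ}
    (hc : Measurable c) (hTT' : IdentDistrib T T' μ μ') :
    ensembleProb μ c T = ensembleProb μ' c T' :=
  funext₂ fun k x ↦
    congrArg ENNReal.toReal (hTT'.measure_mem_eq (measurableSet_setOf_prodMk_eq hc k x))

theorem measureReal_setOf_eq_and_eq_eq_ensembleProb_mul [MeasurableSingletonClass K]
    [MeasurableSingletonClass K'] {c : Θ × 𝒳 → K} {c' : Θ' × 𝒳 → K'} {T : Ω → Θ} {T' : Ω → Θ'}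
    (hc : Measurable c) (hc' : Measurable c') (hTT' : IndepFun T T' μ) (k : K) (k' : K') (x : 𝒳) :
    μ.real {ω | c (T ω, x) = k ∧ c' (T' ω, x) = k'} =
      ensembleProb μ c T k x * ensembleProb μ c' T' k' x :=
  (congrArg ENNReal.toReal <| hTT'.measure_inter_preimage_eq_mul _ _
    (measurableSet_setOf_prodMk_eq hc k x)
    (measurableSet_setOf_prodMk_eq hc' k' x)).trans ENNReal.toReal_mul

variable [IsFiniteMeasure μ] {X : Ω → 𝒳} {T : Ω → Θ} {T' : Ω → Θ'}

theorem measureReal_setOf_eq_and_eq_eq_integral_ensembleProb_mul [MeasurableSingletonClass K]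
    [MeasurableSingletonClass K'] {c : Θ × 𝒳 → K} {c' : Θ' × 𝒳 → K'}
    (hc : Measurable c) (hc' : Measurable c') (hX : AEMeasurable X μ) (hT : AEMeasurable T μ)
    (hT' : AEMeasurable T' μ) (hTT'X : IndepFun (fun ω ↦ (T ω, T' ω)) X μ)
    (hTT' : IndepFun T T' μ) (k : K) (k' : K') :
    μ.real {ω | c (T ω, X ω) = k ∧ c' (T' ω, X ω) = k'} =
      ∫ ω, ensembleProb μ c T k (X ω) * ensembleProb μ c' T' k' (X ω) ∂μ := by
  have hs : MeasurableSet {z : 𝒳 × Θ × Θ' | c (z.2.1, z.1) = k ∧ c' (z.2.2, z.1) = k'} :=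
    ((hc.comp (by fun_prop : Measurable fun z : 𝒳 × Θ × Θ' ↦ (z.2.1, z.1)))
      (measurableSet_singleton k)).inter
    ((hc'.comp (by fun_prop : Measurable fun z : 𝒳 × Θ × Θ' ↦ (z.2.2, z.1)))
      (measurableSet_singleton k'))
  calc μ.real {ω | c (T ω, X ω) = k ∧ c' (T' ω, X ω) = k'}
      = ∫ ω, μ.real {ω' | c (T ω', X ω) = k ∧ c' (T' ω', X ω) = k'} ∂μ :=
        measureReal_setOf_prodMk_mem_eq_integral_of_indepFun hX (hT.prodMk hT') hTT'X.symm hs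
    _ = ∫ ω, ensembleProb μ c T k (X ω) * ensembleProb μ c' T' k' (X ω) ∂μ := by
        simp only [measureReal_setOf_eq_and_eq_eq_ensembleProb_mul hc hc' hTT']

theorem hasSum_integral_ensembleProb_mul [Countable K] [MeasurableSingletonClass K]
    {c : Θ × 𝒳 → K} {c' : Θ' × 𝒳 → K} (hc : Measurable c) (hc' : Measurable c')
    (hX : AEMeasurable X μ) (hT : AEMeasurable T μ) (hT' : AEMeasurable T' μ)
    (hTT'X : IndepFun (fun ω ↦ (T ω, T' ω)) X μ) (hTT' : IndepFun T T' μ) :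
    HasSum (fun k ↦ ∫ ω, ensembleProb μ c T k (X ω) * ensembleProb μ c' T' k (X ω) ∂μ)
      (μ.real {ω | c (T ω, X ω) = c' (T' ω, X ω)}) := by
  simp only [← measureReal_setOf_eq_and_eq_eq_integral_ensembleProb_mul hc hc' hX hT hT' hTT'X hTT']
  exact hasSum_measureReal_setOf_eq_and_eq (hc.comp_aemeasurable (hT.prodMk hX))
    (hc'.comp_aemeasurable (hT'.prodMk hX))

end EnsembleProb

theorem expected_disagreement_eq_one_sub_sum_sq_general
    {Ω 𝒳 Θ K : Type*} [MeasurableSpace Ω] [MeasurableSpace 𝒳] [MeasurableSpace Θ]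
    [MeasurableSpace K] [MeasurableSingletonClass K] [Countable K]
    {μ : Measure Ω} [IsProbabilityMeasure μ]
    {X : Ω → 𝒳} {c : Θ × 𝒳 → K} {T₁ T₂ : Ω → Θ}
    (hX : AEMeasurable X μ) (hc : Measurable c)
    (hIndep : IndepFun (fun ω ↦ (T₁ ω, T₂ ω)) X μ)
    (hTT : IndepFun T₁ T₂ μ) (hId : IdentDistrib T₁ T₂ μ μ) :
    HasSum (fun k ↦ ∫ ω, ensembleProb μ c T₁ k (X ω) ^ 2 ∂μ)
      (1 - μ.real {ω | c (T₁ ω, X ω) ≠ c (T₂ ω, X ω)}) := by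
  have hT₁ := hId.aemeasurable_fst
  have hT₂ := hId.aemeasurable_snd
  have hsum := hasSum_integral_ensembleProb_mul hc hc hX hT₁ hT₂ hIndep hTT
  have hcompl : μ.real {ω | c (T₁ ω, X ω) ≠ c (T₂ ω, X ω)} =
      1 - μ.real {ω | c (T₁ ω, X ω) = c (T₂ ω, X ω)} :=
    probReal_compl_eq_one_sub₀ <| nullMeasurableSet_eq_fun
      (hc.comp_aemeasurable (hT₁.prodMk hX)) (hc.comp_aemeasurable (hT₂.prodMk hX))
  rw [hcompl, sub_sub_cancel]
  simpa only [← ensembleProb_eq_of_identDistrib hc hId, ← sq] using hsum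

/-- If the pair `(Θ₁, Θ₂)` is independent of `(X, Y)` and `Θ₁`, `Θ₂` are i.i.d., then
the expected disagreement satisfies `ℙ[c(Θ₁, X) ≠ c(Θ₂, X)] = 1 - ∑ k, E[p k (X) ^ 2]`. -/
theorem expected_disagreement_eq_one_sub_sum_sq
    {Ω 𝒳 Θ K : Type*} [MeasurableSpace Ω] [MeasurableSpace 𝒳] [MeasurableSpace Θ]
    [MeasurableSpace K] [MeasurableSingletonClass K] [Fintype K] [Nonempty K]
    (μ : Measure Ω) [IsProbabilityMeasure μ]
    (X : Ω → 𝒳) (Y : Ω → K) (c : Θ × 𝒳 → K) (T₁ T₂ : Ω → Θ)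
    (hX : Measurable X) (hY : Measurable Y) (hc : Measurable c)
    (hT₁ : Measurable T₁) (hT₂ : Measurable T₂)
    (p : K → 𝒳 → ℝ)
    (hp : ∀ k x, p k x = (μ {ω | c (T₁ ω, x) = k}).toReal)
    -- (Θ₁, Θ₂) is independent of (X, Y)
    (hIndep : IndepFun (fun ω => (T₁ ω, T₂ ω)) (fun ω => (X ω, Y ω)) μ)
    -- Θ₁ and Θ₂ are independent
    (hTT : IndepFun T₁ T₂ μ)
    -- Θ₁ and Θ₂ are identically distributed
    (hId : IdentDistrib T₁ T₂ μ μ) :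
    (μ {ω | c (T₁ ω, X ω) ≠ c (T₂ ω, X ω)}).toReal =
      1 - ∑ k : K, ∫ ω, (p k (X ω)) ^ 2 ∂μ := by
  obtain rfl : p = ensembleProb μ c T₁ := funext₂ hp
  have hsum := expected_disagreement_eq_one_sub_sum_sq_general hX.aemeasurable hc
    (hIndep.comp measurable_id measurable_fst) hTT hId
  exact eq_sub_of_add_eq' (eq_sub_iff_add_eq.1 ((hasSum_fintype _).unique hsum))
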